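/- Let V be a finite-dimensional vector space over a field K of characteristic zero and N a nilpotent endomorphism of V. Then there exists a unique increasing filtration (M_r)_{r ∈ ℤ} of V (the monodromy filtration) that is exhaustive and separated, satisfies N(M_r) ⊆ M_{r-2} for all r, and such that for every r ≥ 0 the induced map N^r : M_r/M_{r-1} → M_{-r}/M_{-r-1} is an isomorphism. -/

import Mathlib

def MonoP {K V : Type*} [Field K] [AddCommGroup V] [Module K V] (N : Module.End K V)
    (M : ℤ → Submodule K V) : Prop :=
      Monotone M ∧
      (∃ a : ℤ, ∀ r ≥ a, M r = ⊤) ∧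
      (∃ b : ℤ, ∀ r ≤ b, M r = ⊥) ∧
      (∀ r : ℤ, (M r).map N ≤ M (r - 2)) ∧
      (∀ r : ℕ,
        (∀ x ∈ M (r : ℤ), (N ^ r) x ∈ M (-(r : ℤ) - 1) → x ∈ M ((r : ℤ) - 1)) ∧
        (∀ y ∈ M (-(r : ℤ)), ∃ x ∈ M (r : ℤ), (N ^ r) x - y ∈ M (-(r : ℤ) - 1)))

theorem shift_pow {K V : Type*} [Field K] [AddCommGroup V] [Module K V] {N : Module.End K V}
    {M : ℤ → Submodule K V} (h : ∀ r : ℤ, (M r).map N ≤ M (r - 2)) (k : ℕ) :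
    ∀ (r : ℤ) (x : V), x ∈ M r → (N ^ k) x ∈ M (r - 2 * k) := by
  induction k with
  | zero => intro r x hx; simpa using hx
  | succ k ih =>
    intro r x hx
    have h1 := h _ (Submodule.mem_map_of_mem (ih r x hx))
    rw [pow_succ', Module.End.mul_apply]
    convert h1 using 2
    push_cast; ring

theorem MonoP.surj {K V : Type*} [Field K] [AddCommGroup V] [Module K V] {N : Module.End K V}
    {M : ℤ → Submodule K V} (h : MonoP N M) (r : ℕ) :
    ∀ y ∈ M (-(r : ℤ)), ∃ x ∈ M (r : ℤ), (N ^ r) x = y := by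
  obtain ⟨hm, -, ⟨b, hb⟩, hs, hi⟩ := h
  have key : ∀ (d r : ℕ), -b ≤ (r : ℤ) + d →
      ∀ y ∈ M (-(r : ℤ)), ∃ x ∈ M (r : ℤ), (N ^ r) x = y := by
    intro d
    induction d with
    | zero =>
      intro r hr y hy
      rw [hb _ (by push_cast at hr; omega)] at hy
      exact ⟨0, zero_mem _, by rw [map_zero]; exact ((Submodule.mem_bot K).1 hy).symm⟩
    | succ d ih =>
      intro r hr y hy
      obtain ⟨x, hx, hxy⟩ := (hi r).2 y hy
      obtain ⟨z, hz, hzy⟩ := ih (r + 1) (by push_cast at hr ⊢; omega) ((N ^ r) x - y) (by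
        convert hxy using 2; push_cast; ring)
      have hNz : N z ∈ M (r : ℤ) :=
        hm (by push_cast; omega) (hs _ (Submodule.mem_map_of_mem hz))
      refine ⟨x - N z, sub_mem hx hNz, ?_⟩
      rw [pow_succ, Module.End.mul_apply] at hzy
      rw [map_sub, hzy]; abel
  exact key (-b).toNat r (by omega)

theorem MonoP.le {K V : Type*} [Field K] [AddCommGroup V] [Module K V] {N : Module.End K V}
    {M F : ℤ → Submodule K V} (h : MonoP N M) (hF : MonoP N F) (r : ℤ) : M r ≤ F r := by
  have hsurj := h.surj
  obtain ⟨hm, -, -, hs, -⟩ := h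
  obtain ⟨hm', ⟨a, ha⟩, -, hs', hi'⟩ := hF
  have key : ∀ (d r : ℕ), a ≤ (r : ℤ) + d → M r ≤ F r := by
    intro d
    induction d with
    | zero => intro r hr; rw [ha r (by push_cast at hr; omega)]; exact le_top
    | succ d ih =>
      intro r hr x hx
      have h1 : x ∈ F ((r + 1 : ℕ) : ℤ) :=
        ih (r + 1) (by push_cast at hr ⊢; omega) (hm (by push_cast; omega) hx)
      have h2 := shift_pow hs (r + 1) _ x hx
      obtain ⟨z, hz, hzx⟩ := hsurj (r + 2) ((N ^ (r + 1)) x) (by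
        convert h2 using 2; push_cast; ring)
      have h3 := shift_pow hs' (r + 2) _ z (ih (r + 2) (by push_cast at hr ⊢; omega) hz)
      rw [hzx] at h3
      have := (hi' (r + 1)).1 x h1 (by convert h3 using 2; push_cast; ring)
      convert this using 2; push_cast; ring
  have key' : ∀ r : ℕ, M r ≤ F r := fun r => key a.toNat r (by omega)
  obtain ⟨n, rfl | rfl⟩ := r.eq_nat_or_neg
  · exact key' n
  · intro y hy
    obtain ⟨x, hx, rfl⟩ := hsurj n y hy
    convert shift_pow hs' n _ x (key' n hx) using 2; ring

/-- the explicit filtration -/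
def monoF {K V : Type*} [Field K] [AddCommGroup V] [Module K V] (N : Module.End K V)
    (r : ℤ) : Submodule K V :=
  ⨆ q : ℕ, (LinearMap.ker (N ^ (r + 2 * q + 1).toNat)).map (N ^ q)

theorem mem_monoF {K V : Type*} [Field K] [AddCommGroup V] [Module K V] (N : Module.End K V)
    (r : ℤ) (q : ℕ) (z : V) (hz : (N ^ (r + 2 * q + 1).toNat) z = 0) :
    (N ^ q) z ∈ monoF N r :=
  Submodule.mem_iSup_of_mem q (Submodule.mem_map_of_mem hz)

theorem monoF_le {K V : Type*} [Field K] [AddCommGroup V] [Module K V] (N : Module.End K V)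
    (r : ℤ) (W : Submodule K V)
    (h : ∀ (q : ℕ) (z : V), (N ^ (r + 2 * q + 1).toNat) z = 0 → (N ^ q) z ∈ W) :
    monoF N r ≤ W := by
  refine iSup_le fun q => ?_
  rintro _ ⟨z, hz, rfl⟩
  exact h q z hz

theorem pow_zero_of_le {K V : Type*} [Field K] [AddCommGroup V] [Module K V]
    (N : Module.End K V) {a b : ℕ} (hab : a ≤ b) {z : V} (hz : (N ^ a) z = 0) :
    (N ^ b) z = 0 := by
  rw [← Nat.sub_add_cancel hab, pow_add, Module.End.mul_apply, hz, map_zero]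

theorem monoF_surj {K V : Type*} [Field K] [AddCommGroup V] [Module K V]
    (N : Module.End K V) (r : ℕ) :
    monoF N (-(r : ℤ)) ≤ (monoF N r).map (N ^ r) := by
  refine monoF_le N _ _ fun q z hz => ?_
  rcases lt_or_ge q r with hq | hq
  · rw [pow_zero_of_le N (by omega) hz]; exact zero_mem _
  · refine ⟨(N ^ (q - r)) z, mem_monoF N _ _ _ ?_, ?_⟩
    · exact pow_zero_of_le N (by omega) hz
    · rw [← Module.End.mul_apply, ← pow_add]; congr 2; omega

theorem monoF_shift {K V : Type*} [Field K] [AddCommGroup V] [Module K V]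
    (N : Module.End K V) (r : ℤ) : (monoF N r).map N ≤ monoF N (r - 2) := by
  rw [Submodule.map_le_iff_le_comap]
  refine monoF_le N _ _ fun q z hz => ?_
  rw [Submodule.mem_comap, ← Module.End.mul_apply, ← pow_succ']
  exact mem_monoF N _ _ _ (pow_zero_of_le N (by push_cast; omega) hz)

theorem monoF_mono {K V : Type*} [Field K] [AddCommGroup V] [Module K V]
    (N : Module.End K V) : Monotone (monoF N) := fun r s hrs =>
  monoF_le N _ _ fun q z hz => mem_monoF N _ _ _ (pow_zero_of_le N (by omega) hz)

theorem monoF_monoP {K V : Type*} [Field K] [AddCommGroup V] [Module K V]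
    (N : Module.End K V) (hN : IsNilpotent N) : MonoP N (monoF N) := by
  obtain ⟨n, hn⟩ := hN
  have hz0 : ∀ z, (N ^ n) z = 0 := fun z => by rw [hn]; rfl
  refine ⟨monoF_mono N, ⟨n, fun r hr => ?_⟩, ⟨-n, fun r hr => ?_⟩, monoF_shift N,
    fun r => ⟨fun x hx hNx => ?_, fun y hy => ?_⟩⟩
  · rw [eq_top_iff]
    intro z _
    exact mem_monoF N r 0 z (pow_zero_of_le N (by push_cast; omega) (hz0 z))
  · rw [eq_bot_iff]
    refine monoF_le N _ _ fun q z hz => ?_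
    rw [Submodule.mem_bot]
    rcases lt_or_ge q n with hq | hq
    · exact pow_zero_of_le N (by omega) hz
    · exact pow_zero_of_le N hq (hz0 z)
  · have h1 : -(r : ℤ) - 1 = -((r + 1 : ℕ) : ℤ) := by push_cast; ring
    rw [h1] at hNx
    obtain ⟨w, hw, hwx⟩ := monoF_surj N (r + 1) hNx
    have h2 : N w ∈ monoF N ((r : ℤ) - 1) := by
      have := monoF_shift N _ (Submodule.mem_map_of_mem hw)
      convert this using 2; push_cast; ring
    have h3 : x - N w ∈ monoF N ((r : ℤ) - 1) := by
      refine mem_monoF N _ 0 (x - N w) (pow_zero_of_le N (a := r) (by push_cast; omega) ?_)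
      rw [pow_succ, Module.End.mul_apply] at hwx
      rw [map_sub, hwx, sub_self]
    have := add_mem h3 h2
    rwa [sub_add_cancel] at this
  · obtain ⟨x, hx, rfl⟩ := monoF_surj N r hy
    exact ⟨x, hx, by rw [sub_self]; exact zero_mem _⟩

/-- Existence and uniqueness of the monodromy filtration: for a nilpotent
endomorphism `N` of a finite-dimensional vector space over a field of characteristic
zero, there is a unique increasing, exhaustive and separated filtration `(M_r)_{r ∈ ℤ}`
with `N(M_r) ⊆ M_{r-2}` such that for each `r ≥ 0` the map induced by `N^r` from
`M_r/M_{r-1}` to `M_{-r}/M_{-r-1}` is an isomorphism (encoded by injectivity and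
surjectivity of the induced map on subquotients). -/
theorem stmt7 (K V : Type*) [Field K] [CharZero K] [AddCommGroup V] [Module K V]
    [FiniteDimensional K V] (N : Module.End K V) (hN : IsNilpotent N) :
    ∃! M : ℤ → Submodule K V,
      Monotone M ∧
      (∃ a : ℤ, ∀ r ≥ a, M r = ⊤) ∧
      (∃ b : ℤ, ∀ r ≤ b, M r = ⊥) ∧
      (∀ r : ℤ, (M r).map N ≤ M (r - 2)) ∧
      (∀ r : ℕ,
        (∀ x ∈ M (r : ℤ), (N ^ r) x ∈ M (-(r : ℤ) - 1) → x ∈ M ((r : ℤ) - 1)) ∧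
        (∀ y ∈ M (-(r : ℤ)), ∃ x ∈ M (r : ℤ), (N ^ r) x - y ∈ M (-(r : ℤ) - 1))) := by

  exact ⟨monoF N, monoF_monoP N hN, fun M hM => funext fun r =>
    le_antisymm (MonoP.le (N := N) hM (monoF_monoP N hN) r)
      (MonoP.le (N := N) (monoF_monoP N hN) hM r)⟩
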